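/- arXiv:2205.05068 — 2 statements merged into one kernel-verified Lean document; each statement's English description precedes it below -/
import Mathlib

section
/- Under the converse setup, for every i ∈ {1,…,n} the triple (Y^{i−1}, X^{i−1}, Z^{i−1}) is conditionally independent of (X̃_i, W) given (X̃^{i−1}, Y_i^n, K); i.e., (Y^{i−1}, X^{i−1}, Z^{i−1}) − (X̃^{i−1}, Y_i^n, K) − (X̃_i, W) forms a Markov chain. -/
open MeasureTheory

noncomputable section

/-- Probability mass `P[X = x]` of a finitely-valued random variable `X` on `(Ω, μ)`. -/
def pmass {Ω : Type*} [MeasurableSpace Ω] (μ : Measure Ω) {α : Type*}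
    (X : Ω → α) (x : α) : ℝ :=
  (μ (X ⁻¹' {x})).toReal

/-- Shannon entropy `H(X)` (in nats) of a finitely-valued random variable. -/
def entropyRV {Ω : Type*} [MeasurableSpace Ω] (μ : Measure Ω) {α : Type*} [Fintype α]
    (X : Ω → α) : ℝ :=
  ∑ x : α, Real.negMulLog (pmass μ X x)

/-- Conditional Shannon entropy `H(X | Y)`. -/
def condEntropyRV {Ω : Type*} [MeasurableSpace Ω] (μ : Measure Ω) {α β : Type*}
    [Fintype α] [Fintype β] (X : Ω → α) (Y : Ω → β) : ℝ :=
  entropyRV μ (fun ω => (X ω, Y ω)) - entropyRV μ Y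

/-- Mutual information `I(X;Y)`. -/
def mutualInfoRV {Ω : Type*} [MeasurableSpace Ω] (μ : Measure Ω) {α β : Type*}
    [Fintype α] [Fintype β] (X : Ω → α) (Y : Ω → β) : ℝ :=
  entropyRV μ X + entropyRV μ Y - entropyRV μ (fun ω => (X ω, Y ω))

/-- Conditional mutual information `I(X;Y|Z)`. -/
def condMutualInfoRV {Ω : Type*} [MeasurableSpace Ω] (μ : Measure Ω) {α β γ : Type*}
    [Fintype α] [Fintype β] [Fintype γ] (X : Ω → α) (Y : Ω → β) (Z : Ω → γ) : ℝ :=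
  entropyRV μ (fun ω => (X ω, Z ω)) + entropyRV μ (fun ω => (Y ω, Z ω))
    - entropyRV μ Z - entropyRV μ (fun ω => (X ω, Y ω, Z ω))

/-- Expected value `E[f(X)]` of a function of a finitely-valued random variable. -/
def expVal {Ω : Type*} [MeasurableSpace Ω] (μ : Measure Ω) {α : Type*} [Fintype α]
    (X : Ω → α) (f : α → ℝ) : ℝ :=
  ∑ a : α, pmass μ X a * f a

/-- Independence of two finitely-valued random variables, via their joint mass. -/
def IndepRV {Ω : Type*} [MeasurableSpace Ω] (μ : Measure Ω) {α β : Type*}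
    (X : Ω → α) (Y : Ω → β) : Prop :=
  ∀ a b, pmass μ (fun ω => (X ω, Y ω)) (a, b) = pmass μ X a * pmass μ Y b

/-- Conditional independence of `A` and `C` given `B` (the Markov chain `A − B − C`)
for finitely-valued random variables, via joint masses. -/
def CondIndepRV {Ω : Type*} [MeasurableSpace Ω] (μ : Measure Ω) {α β γ : Type*}
    (A : Ω → α) (B : Ω → β) (C : Ω → γ) : Prop :=
  ∀ a b c,
    pmass μ (fun ω => (A ω, B ω, C ω)) (a, b, c) * pmass μ B b
      = pmass μ (fun ω => (A ω, B ω)) (a, b) * pmass μ (fun ω => (B ω, C ω)) (b, c)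

/-- `X` is uniformly distributed on its (finite) alphabet. -/
def UniformRV {Ω : Type*} [MeasurableSpace Ω] (μ : Measure Ω) {α : Type*} [Fintype α]
    (X : Ω → α) : Prop :=
  ∀ x, pmass μ X x = 1 / (Fintype.card α : ℝ)

/-- The sequence `S = (S_1, …, S_n)` is i.i.d. with single-letter pmf `p`. -/
def HasIIDLaw {Ω : Type*} [MeasurableSpace Ω] (μ : Measure Ω) {α : Type*} {n : ℕ}
    (S : Ω → Fin n → α) (p : α → ℝ) : Prop :=
  ∀ v : Fin n → α, pmass μ S v = ∏ i, p (v i)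

/-- `[a]⁻ = min {a, 0}`. -/
def negPartR (a : ℝ) : ℝ := min a 0

/-!
The past block `S^{i-1}` is independent of the pair `(S_i^n, K)`. Once `X̃^{i-1}` is fixed to a
value, `(X̃_i, W)` is a function of `(S_i^n, K)` alone, so each of the four events in the
conditional independence identity is the intersection of an event about `S^{i-1}` and an event
about `(S_i^n, K)`. Their masses factor accordingly, and the same four factors occur on both sides.
-/

open ProbabilityTheory

section Independence

variable {Ω : Type*} [MeasurableSpace Ω] {μ : Measure Ω}

theorem indepFun_subtype_of_disjoint {ι : Type*} {β : ι → Type*} [∀ j, MeasurableSpace (β j)]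
    {f : ∀ j, Ω → β j} {q r : ι → Prop} [Finite {j // q j}] [Finite {j // r j}]
    (hqr : ∀ j, q j → ¬ r j) (hf : iIndepFun f μ) (hfm : ∀ j, Measurable (f j)) :
    IndepFun (fun ω (j : {j // q j}) => f j ω) (fun ω (j : {j // r j}) => f j ω) μ := by
  have hq : {j | q j}.Finite := Set.finite_coe_iff.1 ‹_›
  have hr : {j | r j}.Finite := Set.finite_coe_iff.1 ‹_›
  have hdisj : Disjoint hq.toFinset hr.toFinset := by
    simpa [Set.disjoint_left] using hqr
  exact (hf.indepFun_finset _ _ hdisj hfm).comp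
    (φ := fun v (j : {j // q j}) => v ⟨j, by simp⟩)
    (ψ := fun v (j : {j // r j}) => v ⟨j, by simp⟩)
    (measurable_pi_lambda _ fun _ => measurable_pi_apply _)
    (measurable_pi_lambda _ fun _ => measurable_pi_apply _)

theorem indepFun_prodMk_right_of_prodMk_left {α β γ : Type*} [MeasurableSpace α]
    [MeasurableSpace β] [MeasurableSpace γ] [IsFiniteMeasure μ]
    {X : Ω → α} {Y : Ω → β} {Z : Ω → γ}
    (hX : Measurable X) (hY : Measurable Y) (hZ : Measurable Z)
    (hXY : IndepFun X Y μ) (hXYZ : IndepFun (fun ω => (X ω, Y ω)) Z μ) :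
    IndepFun X (fun ω => (Y ω, Z ω)) μ := by
  have hYZ : IndepFun Y Z μ := hXYZ.comp measurable_snd measurable_id
  rw [indepFun_iff_map_prod_eq_prod_map_map (by fun_prop) (by fun_prop)] at hXY hYZ hXYZ ⊢
  calc μ.map (fun ω => (X ω, Y ω, Z ω))
      = (μ.map fun ω => ((X ω, Y ω), Z ω)).map MeasurableEquiv.prodAssoc :=
        (Measure.map_map MeasurableEquiv.prodAssoc.measurable ((hX.prodMk hY).prodMk hZ)).symm
    _ = (((μ.map X).prod (μ.map Y)).prod (μ.map Z)).map MeasurableEquiv.prodAssoc := by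
        rw [hXYZ, hXY]
    _ = (μ.map X).prod (μ.map fun ω => (Y ω, Z ω)) := by
        rw [Measure.prodAssoc_prod, hYZ]

end Independence

section Mass

variable {Ω : Type*} [MeasurableSpace Ω] {μ : Measure Ω}

theorem measureReal_map_singleton {α : Type*} [MeasurableSpace α] [MeasurableSingletonClass α]
    {X : Ω → α} (hX : Measurable X) (a : α) : (μ.map X).real {a} = pmass μ X a :=
  map_measureReal_apply hX (measurableSet_singleton a)

theorem IndepRV.indepFun {α β : Type*} [Countable α] [Countable β]
    [MeasurableSpace α] [MeasurableSingletonClass α]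
    [MeasurableSpace β] [MeasurableSingletonClass β] [IsFiniteMeasure μ]
    {X : Ω → α} {Y : Ω → β} (h : IndepRV μ X Y) (hX : Measurable X) (hY : Measurable Y) :
    IndepFun X Y μ := by
  rw [indepFun_iff_map_prod_eq_prod_map_map hX.aemeasurable hY.aemeasurable]
  refine Measure.ext_of_measureReal_singleton fun ⟨a, b⟩ => ?_
  rw [measureReal_map_singleton (hX.prodMk hY), h, ← Set.singleton_prod_singleton,
    measureReal_prod_prod, measureReal_map_singleton hX, measureReal_map_singleton hY]

section ProductMass

variable {ι : Type*} [Fintype ι] {α : ι → Type*} [∀ i, MeasurableSpace (α i)]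
  [∀ i, MeasurableSingletonClass (α i)] {X : Ω → ∀ i, α i} {p : ∀ i, α i → ℝ}

theorem measureReal_box_of_pmass_eq_prod [IsFiniteMeasure μ] (hX : Measurable X)
    (hp : ∀ v, pmass μ X v = ∏ i, p i (v i)) (t : ∀ i, Finset (α i)) :
    μ.real {ω | ∀ i, X ω i ∈ t i} = ∏ i, ∑ a ∈ t i, p i a := by
  classical
  have hbox : {ω | ∀ i, X ω i ∈ t i} = X ⁻¹' (Fintype.piFinset t) := by
    ext ω
    simp
  rw [hbox, ← sum_measureReal_preimage_singleton _ fun v _ => hX (measurableSet_singleton v),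
    Finset.prod_univ_sum]
  exact Finset.sum_congr rfl fun v _ => hp v

variable [IsProbabilityMeasure μ]

theorem prod_sum_eq_one_of_pmass_eq_prod [∀ i, Fintype (α i)] (hX : Measurable X)
    (hp : ∀ v, pmass μ X v = ∏ i, p i (v i)) : ∏ i, ∑ a, p i a = 1 := by
  simp [← measureReal_box_of_pmass_eq_prod hX hp fun _ => Finset.univ]

-- `hp` determines the `p i` only up to scalars with product `1`, hence the factor `∑ b, p i b`.
theorem pmass_eval_mul_sum_of_pmass_eq_prod [∀ i, Fintype (α i)] (hX : Measurable X)
    (hp : ∀ v, pmass μ X v = ∏ i, p i (v i)) (i : ι) (a : α i) :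
    pmass μ (fun ω => X ω i) a * ∑ b, p i b = p i a := by
  classical
  let t : ∀ j, Finset (α j) := Function.update (fun _ => Finset.univ) i {a}
  have hbox : (fun ω => X ω i) ⁻¹' {a} = {ω | ∀ j, X ω j ∈ t j} := by
    ext ω
    simp [t, Function.forall_update_iff _ fun j s => X ω j ∈ s]
  have hmarginal : pmass μ (fun ω => X ω i) a = p i a * ∏ j ∈ {i}ᶜ, ∑ b, p j b := by
    rw [pmass, hbox]
    refine (measureReal_box_of_pmass_eq_prod hX hp t).trans ?_
    rw [Fintype.prod_eq_mul_prod_compl i]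
    congr 1
    · simp [t]
    · refine Finset.prod_congr rfl fun j hj => ?_
      simp [t, Function.update_of_ne (by simpa using hj : j ≠ i)]
  calc pmass μ (fun ω => X ω i) a * ∑ b, p i b
      = p i a * ((∑ b, p i b) * ∏ j ∈ {i}ᶜ, ∑ b, p j b) := by rw [hmarginal]; ring
    _ = p i a := by
        rw [← Fintype.prod_eq_mul_prod_compl i fun j => ∑ b, p j b,
          prod_sum_eq_one_of_pmass_eq_prod hX hp, mul_one]

theorem iIndepFun_of_pmass_eq_prod [∀ i, Finite (α i)] (hX : Measurable X)
    (hp : ∀ v, pmass μ X v = ∏ i, p i (v i)) : iIndepFun (fun i ω => X ω i) μ := by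
  have (i : ι) := Fintype.ofFinite (α i)
  have hXi (i : ι) : Measurable fun ω => X ω i := (measurable_pi_apply i).comp hX
  rw [iIndepFun_iff_map_fun_eq_pi_map fun i => (hXi i).aemeasurable]
  refine Measure.ext_of_measureReal_singleton fun v => ?_
  calc (μ.map X).real {v}
      = ∏ i, p i (v i) := by rw [measureReal_map_singleton hX, hp]
    _ = ∏ i, pmass μ (fun ω => X ω i) (v i) * ∑ a, p i a := by
        simp only [pmass_eval_mul_sum_of_pmass_eq_prod hX hp]
    _ = ∏ i, pmass μ (fun ω => X ω i) (v i) := by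
        rw [Finset.prod_mul_distrib, prod_sum_eq_one_of_pmass_eq_prod hX hp, mul_one]
    _ = (Measure.pi fun i => μ.map fun ω => X ω i).real {v} := by
        rw [← Set.univ_pi_singleton, measureReal_def, Measure.pi_pi, ENNReal.toReal_prod]
        exact Finset.prod_congr rfl fun i _ => (measureReal_map_singleton (hXi i) (v i)).symm

end ProductMass

theorem HasIIDLaw.iIndepFun [IsProbabilityMeasure μ] {α : Type*} [Finite α] [MeasurableSpace α]
    [MeasurableSingletonClass α] {n : ℕ} {S : Ω → Fin n → α} {p : α → ℝ}
    (h : HasIIDLaw μ S p) (hS : Measurable S) :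
    iIndepFun (fun i ω => S ω i) μ :=
  iIndepFun_of_pmass_eq_prod (p := fun _ => p) hS h

theorem pmass_eq_mul_of_indepFun {α β γ : Type*} [MeasurableSpace α] [MeasurableSpace β]
    {X : Ω → α} {Y : Ω → β} (h : IndepFun X Y μ) {s : Set α} {t : Set β}
    (hs : MeasurableSet s) (ht : MeasurableSet t) {G : Ω → γ} {g : γ}
    (hG : ∀ ω, G ω = g ↔ X ω ∈ s ∧ Y ω ∈ t) :
    pmass μ G g = μ.real (X ⁻¹' s) * μ.real (Y ⁻¹' t) := by
  have hpre : G ⁻¹' {g} = X ⁻¹' s ∩ Y ⁻¹' t := Set.ext hG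
  rw [pmass, hpre, h.measure_inter_preimage_eq_mul s t hs ht, ENNReal.toReal_mul,
    measureReal_def, measureReal_def]

theorem condIndepRV_of_indepFun {α β α₁ α₂ β₁ γ : Type*}
    [MeasurableSpace α] [DiscreteMeasurableSpace α] [MeasurableSpace β] [DiscreteMeasurableSpace β]
    {X : Ω → α} {Y : Ω → β} (h : IndepFun X Y μ)
    (f : α → α₁) (g : α → α₂) (u : β → β₁) (w : α₂ → β → γ) :
    CondIndepRV μ (fun ω => f (X ω)) (fun ω => (g (X ω), u (Y ω)))
      (fun ω => w (g (X ω)) (Y ω)) := by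
  rintro a ⟨b, c⟩ d
  have hg : MeasurableSet {x | g x = b} := .of_discrete
  have hfg : MeasurableSet {x | f x = a ∧ g x = b} := .of_discrete
  have hu : MeasurableSet {y | u y = c} := .of_discrete
  have huw : MeasurableSet {y | u y = c ∧ w b y = d} := .of_discrete
  rw [pmass_eq_mul_of_indepFun h hfg huw (by grind), pmass_eq_mul_of_indepFun h hg hu (by grind),
    pmass_eq_mul_of_indepFun h hfg hu (by grind), pmass_eq_mul_of_indepFun h hg huw (by grind)]
  ring

end Mass

theorem past_blocks_condIndep_general {ι 𝒳 𝒳t 𝒴 𝒵 𝒲 𝒦 Ω : Type*} [LinearOrder ι] [Finite ι]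
    [Countable 𝒳] [Countable 𝒳t] [Countable 𝒴] [Countable 𝒵] [Countable 𝒦]
    [MeasurableSpace 𝒳] [MeasurableSingletonClass 𝒳]
    [MeasurableSpace 𝒳t] [MeasurableSingletonClass 𝒳t]
    [MeasurableSpace 𝒴] [MeasurableSingletonClass 𝒴]
    [MeasurableSpace 𝒵] [MeasurableSingletonClass 𝒵]
    [MeasurableSpace 𝒦] [MeasurableSingletonClass 𝒦]
    [MeasurableSpace Ω] {μ : Measure Ω}
    (S : Ω → ι → 𝒳t × 𝒳 × 𝒴 × 𝒵) (K : Ω → 𝒦) (hS : Measurable S) (hK : Measurable K)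
    (hSindep : iIndepFun (fun j ω => S ω j) μ) (hKS : IndepFun K S μ)
    (enc : (ι → 𝒳t) → 𝒦 → 𝒲) (i : ι) :
    CondIndepRV μ
      (fun ω => ((fun j : {j // j < i} => (S ω j).2.2.1), (fun j : {j // j < i} => (S ω j).2.1),
        (fun j : {j // j < i} => (S ω j).2.2.2)))
      (fun ω => ((fun j : {j // j < i} => (S ω j).1), (fun j : {j // i ≤ j} => (S ω j).2.2.1),
        K ω))
      (fun ω => ((S ω i).1, enc (fun j => (S ω j).1) (K ω))) := by
  have := hSindep.isProbabilityMeasure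
  let past (ω : Ω) (j : {j // j < i}) := S ω j
  let future (ω : Ω) (j : {j // i ≤ j}) := S ω j
  have hpast_future : IndepFun past future μ :=
    indepFun_subtype_of_disjoint (fun _ => not_le_of_gt) hSindep (by fun_prop)
  have hblocks_key : IndepFun (fun ω => (past ω, future ω)) K μ :=
    hKS.symm.comp (φ := fun v => (fun j : {j // j < i} => v j, fun j : {j // i ≤ j} => v j))
      (by fun_prop) measurable_id
  have hindep : IndepFun past (fun ω => (future ω, K ω)) μ :=
    indepFun_prodMk_right_of_prodMk_left (by fun_prop) (by fun_prop) hK hpast_future hblocks_key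
  simpa [past, future] using condIndepRV_of_indepFun hindep
    (fun v => (fun j => (v j).2.2.1, fun j => (v j).2.1, fun j => (v j).2.2.2))
    (fun v j => (v j).1)
    (fun r => (fun j => (r.1 j).2.2.1, r.2))
    (fun t r => ((r.1 ⟨i, le_rfl⟩).1,
      enc (fun j => if hj : j < i then t ⟨j, hj⟩ else (r.1 ⟨j, not_lt.1 hj⟩).1) r.2))

/-- Under the converse setup, for every `i` the triple `(Y^{i−1}, X^{i−1}, Z^{i−1})`
is conditionally independent of `(X̃ᵢ, W)` given `(X̃^{i−1}, Yᵢⁿ, K)`. -/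
theorem past_blocks_condIndep
    {𝒳 𝒳t 𝒴 𝒵 𝒲 𝒦 : Type}
    [Fintype 𝒳] [Fintype 𝒳t] [Fintype 𝒴] [Fintype 𝒵] [Fintype 𝒲] [Fintype 𝒦]
    [MeasurableSpace 𝒳] [DiscreteMeasurableSpace 𝒳]
    [MeasurableSpace 𝒳t] [DiscreteMeasurableSpace 𝒳t]
    [MeasurableSpace 𝒴] [DiscreteMeasurableSpace 𝒴]
    [MeasurableSpace 𝒵] [DiscreteMeasurableSpace 𝒵]
    [MeasurableSpace 𝒲] [DiscreteMeasurableSpace 𝒲]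
    [MeasurableSpace 𝒦] [DiscreteMeasurableSpace 𝒦]
    {Ω : Type} [MeasurableSpace Ω] (μ : MeasureTheory.Measure Ω)
    [MeasureTheory.IsProbabilityMeasure μ]
    {n : ℕ} (S : Ω → Fin n → 𝒳t × 𝒳 × 𝒴 × 𝒵) (K : Ω → 𝒦)
    (hSmeas : Measurable S) (hKmeas : Measurable K)
    (pX : 𝒳 → ℝ) (pXt : 𝒳 → 𝒳t → ℝ) (pYZ : 𝒳 → 𝒴 × 𝒵 → ℝ)
    (hpX0 : ∀ x, 0 ≤ pX x) (hpX1 : ∑ x, pX x = 1)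
    (hpXt0 : ∀ x a, 0 ≤ pXt x a) (hpXt1 : ∀ x, ∑ a, pXt x a = 1)
    (hpYZ0 : ∀ x yz, 0 ≤ pYZ x yz) (hpYZ1 : ∀ x, ∑ yz, pYZ x yz = 1)
    (hiid : HasIIDLaw μ S (fun s => pX s.2.1 * pXt s.2.1 s.1 * pYZ s.2.1 s.2.2))
    (hKunif : UniformRV μ K) (hKind : IndepRV μ K S)
    (enc : (Fin n → 𝒳t) → 𝒦 → 𝒲)
    :
    ∀ i : Fin n,
      CondIndepRV μ
        (fun ω => ((fun j : {j : Fin n // j.1 < i} => (S ω j.1).2.2.1), (fun j : {j : Fin n // j.1 < i} => (S ω j.1).2.1), (fun j : {j : Fin n // j.1 < i} => (S ω j.1).2.2.2)))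
        (fun ω => ((fun j : {j : Fin n // j.1 < i} => (S ω j.1).1), (fun j : {j : Fin n // i ≤ j} => (S ω j.1).2.2.1), K ω))
        (fun ω => ((S ω i).1, enc (fun j => (S ω j).1) (K ω))) :=
  past_blocks_condIndep_general S K hSmeas hKmeas
    (hiid.iIndepFun hSmeas) (hKind.indepFun hKmeas hSmeas) enc
end
end

section
/- Under the converse setup, for every i ∈ {1,…,n} the block Z^{i−1} is conditionally independent of (X_i, W) given (X^{i−1}, Y_{i+1}^n, K), and Z^{i−1} is conditionally independent of (Y_i, W) given (X^{i−1}, Y_{i+1}^n, K); i.e., both Z^{i−1} − (X^{i−1}, Y_{i+1}^n, K) − (X_i, W) and Z^{i−1} − (X^{i−1}, Y_{i+1}^n, K) − (Y_i, W) form Markov chains. -/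
open MeasureTheory

noncomputable section

/-!
The joint mass of `(Y^{i-1}, Z^{i-1})`, `X^{i-1}` and `(K, X̃ⁿ, (X, Y, Z)_i^n)` is a function of the
first two times a function of the last two, because each letter factorizes given `X_j` and the
letters and `K` are independent. This is a Markov chain
`(Y^{i-1}, Z^{i-1}) − X^{i-1} − (K, X̃ⁿ, (X, Y, Z)_i^n)`. Weak union moves `(Y_{i+1}^n, K)` into the
conditioning, and `(X_i, W)` and `(Y_i, W)` are functions of what remains together with `K`.
-/

section PMass

variable {Ω α β γ : Type*} [MeasurableSpace Ω] {μ : Measure Ω}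

lemma pmass_congr {X : Ω → α} {Y : Ω → β} {x : α} {y : β} (h : ∀ ω, X ω = x ↔ Y ω = y) :
    pmass μ X x = pmass μ Y y :=
  congrArg (fun s => (μ s).toReal) (Set.ext h)

variable [IsFiniteMeasure μ]

lemma pmass_prodMk_le_left (X : Ω → α) (Y : Ω → β) (x : α) (y : β) :
    pmass μ (fun ω => (X ω, Y ω)) (x, y) ≤ pmass μ X x :=
  ENNReal.toReal_mono (measure_ne_top _ _)
    (measure_mono fun _ hω => congrArg Prod.fst hω)

lemma pmass_prodMk_eq_zero_of_left {X : Ω → α} {x : α} (h : pmass μ X x = 0)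
    (Y : Ω → β) (y : β) : pmass μ (fun ω => (X ω, Y ω)) (x, y) = 0 :=
  le_antisymm (h ▸ pmass_prodMk_le_left X Y x y) ENNReal.toReal_nonneg

variable [Fintype β] [MeasurableSpace β] [MeasurableSingletonClass β] {Y : Ω → β}

lemma pmass_prodMk_comp [DecidableEq γ] (hY : Measurable Y) (X : Ω → α) (f : β → γ)
    (x : α) (z : γ) :
    pmass μ (fun ω => (X ω, f (Y ω))) (x, z)
      = ∑ y with f y = z, pmass μ (fun ω => (X ω, Y ω)) (x, y) := by
  have hfiber : ∀ y, MeasurableSet (Y ⁻¹' {y}) := fun y => hY (measurableSet_singleton y)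
  have hinter : ∀ y, μ ((fun ω => (X ω, Y ω)) ⁻¹' {(x, y)})
      = μ.restrict (X ⁻¹' {x}) (Y ⁻¹' {y}) := fun y => by
    rw [Measure.restrict_apply (hfiber y), Set.inter_comm]
    simp only [← Set.singleton_prod_singleton, Set.mk_preimage_prod]
  have hunion : MeasurableSet (Y ⁻¹' ↑({y | f y = z} : Finset β)) :=
    hY (Finset.measurableSet _)
  simp only [pmass, hinter]
  rw [← ENNReal.toReal_sum fun _ _ => measure_ne_top _ _,
    sum_measure_preimage_singleton _ fun y _ => hfiber y, Measure.restrict_apply hunion]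
  congr 2
  ext ω
  simp [and_comm]

lemma sum_pmass_prodMk (hY : Measurable Y) (X : Ω → α) (x : α) :
    ∑ y, pmass μ (fun ω => (X ω, Y ω)) (x, y) = pmass μ X x := by
  have hmarginal := pmass_prodMk_comp (μ := μ) hY X (fun _ => ()) x ()
  rw [Finset.filter_true_of_mem fun _ _ => rfl] at hmarginal
  exact hmarginal.symm.trans (pmass_congr fun ω => by simp)

end PMass

section CondIndepRV

variable {Ω α β γ δ : Type*} [MeasurableSpace Ω] {μ : Measure Ω}
  {A : Ω → α} {B : Ω → β} {C : Ω → γ} {D : Ω → δ}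

lemma CondIndepRV.symm (h : CondIndepRV μ A B C) : CondIndepRV μ C B A := by
  intro c b a
  have hjoint : pmass μ (fun ω => (C ω, B ω, A ω)) (c, b, a)
      = pmass μ (fun ω => (A ω, B ω, C ω)) (a, b, c) :=
    pmass_congr fun ω => by simp only [Prod.mk.injEq]; tauto
  have hleft : pmass μ (fun ω => (C ω, B ω)) (c, b) = pmass μ (fun ω => (B ω, C ω)) (b, c) :=
    pmass_congr fun ω => by simp only [Prod.mk.injEq, and_comm]
  have hright : pmass μ (fun ω => (B ω, A ω)) (b, a) = pmass μ (fun ω => (A ω, B ω)) (a, b) :=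
    pmass_congr fun ω => by simp only [Prod.mk.injEq, and_comm]
  rw [hjoint, hleft, hright, h a b c, mul_comm]

variable [IsFiniteMeasure μ]

section

variable [Finite γ] [MeasurableSpace γ] [MeasurableSingletonClass γ]

lemma CondIndepRV.comp_right (h : CondIndepRV μ A B C) (hC : Measurable C) (f : β → γ → δ) :
    CondIndepRV μ A B (fun ω => f (B ω) (C ω)) := by
  classical
  cases nonempty_fintype γ
  intro a b d
  have hjoint : pmass μ (fun ω => (A ω, B ω, f (B ω) (C ω))) (a, b, d)
      = ∑ c with f b c = d, pmass μ (fun ω => (A ω, B ω, C ω)) (a, b, c) := calc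
    _ = pmass μ (fun ω => ((A ω, B ω), f b (C ω))) ((a, b), d) :=
      pmass_congr fun ω => by simp only [Prod.mk.injEq]; grind
    _ = ∑ c with f b c = d, pmass μ (fun ω => ((A ω, B ω), C ω)) ((a, b), c) :=
      pmass_prodMk_comp hC _ (f b) _ _
    _ = _ := Finset.sum_congr rfl fun c _ =>
      pmass_congr fun ω => by simp only [Prod.mk.injEq, and_assoc]
  have hright : pmass μ (fun ω => (B ω, f (B ω) (C ω))) (b, d)
      = ∑ c with f b c = d, pmass μ (fun ω => (B ω, C ω)) (b, c) := calc
    _ = pmass μ (fun ω => (B ω, f b (C ω))) (b, d) :=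
      pmass_congr fun ω => by simp only [Prod.mk.injEq]; grind
    _ = _ := pmass_prodMk_comp hC B (f b) b d
  rw [hjoint, hright, Finset.sum_mul, Finset.mul_sum]
  exact Finset.sum_congr rfl fun c _ => h a b c

lemma CondIndepRV.weak_union [Finite δ] [MeasurableSpace δ] [MeasurableSingletonClass δ]
    (h : CondIndepRV μ A B (fun ω => (C ω, D ω))) (hC : Measurable C) (hD : Measurable D) :
    CondIndepRV μ A (fun ω => (B ω, D ω)) C := by
  rintro a ⟨b, d⟩ c
  have hACD := h a b (c, d)
  have hAD : pmass μ (fun ω => (A ω, B ω, D ω)) (a, b, d) * pmass μ B b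
      = pmass μ (fun ω => (A ω, B ω)) (a, b) * pmass μ (fun ω => (B ω, D ω)) (b, d) :=
    h.comp_right (hC.prodMk hD) (fun _ => Prod.snd) a b d
  have hjoint : pmass μ (fun ω => (A ω, (B ω, D ω), C ω)) (a, (b, d), c)
      = pmass μ (fun ω => (A ω, B ω, C ω, D ω)) (a, b, c, d) :=
    pmass_congr fun ω => by simp only [Prod.mk.injEq]; tauto
  have hright : pmass μ (fun ω => ((B ω, D ω), C ω)) ((b, d), c)
      = pmass μ (fun ω => (B ω, C ω, D ω)) (b, c, d) :=
    pmass_congr fun ω => by simp only [Prod.mk.injEq]; tauto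
  rw [hjoint, hright]
  by_cases hb : pmass μ B b = 0
  · rw [pmass_prodMk_eq_zero_of_left hb D, pmass_prodMk_eq_zero_of_left hb, mul_zero, mul_zero]
  · apply mul_right_cancel₀ hb
    linear_combination pmass μ (fun ω => (B ω, D ω)) (b, d) * hACD
      - pmass μ (fun ω => (B ω, C ω, D ω)) (b, c, d) * hAD

end

variable [Finite α] [MeasurableSpace α] [MeasurableSingletonClass α]

lemma CondIndepRV.comp_left (h : CondIndepRV μ A B C) (hA : Measurable A) (f : β → α → δ) :
    CondIndepRV μ (fun ω => f (B ω) (A ω)) B C :=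
  (h.symm.comp_right hA f).symm

variable [Finite γ] [MeasurableSpace γ] [MeasurableSingletonClass γ]

lemma condIndepRV_of_pmass_eq_mul (hA : Measurable A) (hC : Measurable C)
    {f : α → β → ℝ} {g : β → γ → ℝ}
    (h : ∀ a b c, pmass μ (fun ω => (A ω, B ω, C ω)) (a, b, c) = f a b * g b c) :
    CondIndepRV μ A B C := by
  cases nonempty_fintype α
  cases nonempty_fintype γ
  have hAB : ∀ a b, pmass μ (fun ω => (A ω, B ω)) (a, b) = f a b * ∑ c, g b c := fun a b => by
    rw [← sum_pmass_prodMk hC, Finset.mul_sum]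
    exact Finset.sum_congr rfl fun c _ => (h a b c).symm ▸
      pmass_congr fun ω => by simp only [Prod.mk.injEq, and_assoc]
  have hBC : ∀ b c, pmass μ (fun ω => (B ω, C ω)) (b, c) = (∑ a, f a b) * g b c := fun b c => by
    rw [← sum_pmass_prodMk hA, Finset.sum_mul]
    exact Finset.sum_congr rfl fun a _ => (h a b c).symm ▸
      pmass_congr fun ω => by simp only [Prod.mk.injEq, and_comm]
  have hB : ∀ b, pmass μ B b = (∑ a, f a b) * ∑ c, g b c := fun b => by
    rw [← sum_pmass_prodMk hC, Finset.mul_sum]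
    exact Finset.sum_congr rfl fun c _ => hBC b c
  intro a b c
  rw [h, hAB, hBC, hB]
  ring

end CondIndepRV

section Letterwise

variable {Ω ι 𝒰 𝒳 𝒱 𝒦 : Type*} [MeasurableSpace Ω] {μ : Measure Ω} [IsFiniteMeasure μ] [Fintype ι]
  [Finite 𝒰] [MeasurableSpace 𝒰] [MeasurableSingletonClass 𝒰]
  [Finite 𝒳] [MeasurableSpace 𝒳] [MeasurableSingletonClass 𝒳]
  [Finite 𝒱] [MeasurableSpace 𝒱] [MeasurableSingletonClass 𝒱]
  [Finite 𝒦] [MeasurableSpace 𝒦] [MeasurableSingletonClass 𝒦]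
  {S : Ω → ι → 𝒰 × 𝒳 × 𝒱} {K : Ω → 𝒦}

lemma condIndepRV_restrict_of_letterwise (hS : Measurable S) (hK : Measurable K)
    {f : ι → 𝒳 → 𝒰 → ℝ} {g : ι → 𝒳 → 𝒱 → ℝ}
    (hlaw : ∀ s, pmass μ S s = ∏ j, f j (s j).2.1 (s j).1 * g j (s j).2.1 (s j).2.2)
    (hKS : IndepRV μ K S) (P : ι → Prop) :
    CondIndepRV μ
      (fun ω => fun j : {j // P j} => (S ω j).2.2)
      (fun ω => fun j : {j // P j} => (S ω j).2.1)
      (fun ω => (K ω, (fun j => (S ω j).1), fun j : {j // ¬ P j} => (S ω j).2)) := by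
  classical
  refine condIndepRV_of_pmass_eq_mul (by fun_prop) (by fun_prop)
    (f := fun v x => ∏ j : {j // P j}, g j (x j) (v j))
    (g := fun x c => pmass μ K c.1 * ((∏ j : {j // P j}, f j (x j) (c.2.1 j))
      * ∏ j : {j // ¬ P j}, f j (c.2.2 j).1 (c.2.1 j) * g j (c.2.2 j).1 (c.2.2 j).2)) ?_
  rintro v x ⟨k, u, r⟩
  let s : ι → 𝒰 × 𝒳 × 𝒱 := fun j => (u j, if h : P j then (x ⟨j, h⟩, v ⟨j, h⟩) else r ⟨j, h⟩)
  have hs_pos : ∀ j : {j // P j}, s j = (u j, x j, v j) := fun j => by simp [s, j.2]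
  have hs_neg : ∀ j : {j // ¬ P j}, s j = (u j, r j) := fun j => by simp [s, j.2]
  have hassemble : ∀ t : ι → 𝒰 × 𝒳 × 𝒱,
      t = s ↔ (fun j : {j // P j} => (t j).2.2) = v ∧ (fun j : {j // P j} => (t j).2.1) = x
        ∧ (fun j => (t j).1) = u ∧ (fun j : {j // ¬ P j} => (t j).2) = r := by
    intro t
    constructor
    · rintro rfl
      exact ⟨funext fun j => by rw [hs_pos], funext fun j => by rw [hs_pos], rfl,
        funext fun j => by rw [hs_neg]⟩
    · rintro ⟨rfl, rfl, rfl, rfl⟩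
      funext j
      simp [s]
  calc pmass μ _ (v, x, k, u, r)
      = pmass μ (fun ω => (K ω, S ω)) (k, s) :=
        pmass_congr fun ω => by simp only [Prod.mk.injEq, hassemble]; tauto
    _ = pmass μ K k * ∏ j, f j (s j).2.1 (s j).1 * g j (s j).2.1 (s j).2.2 := by
        rw [hKS, hlaw]
    _ = _ := by
        rw [← Fintype.prod_subtype_mul_prod_subtype P]
        simp only [hs_pos, hs_neg, Finset.prod_mul_distrib]
        ring

end Letterwise

theorem eavesdropper_past_condIndep_general
    {Ω ι 𝒳t 𝒳 𝒴 𝒵 𝒦 : Type*} [MeasurableSpace Ω] {μ : Measure Ω} [IsFiniteMeasure μ] [Fintype ι]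
    [Finite 𝒳t] [MeasurableSpace 𝒳t] [MeasurableSingletonClass 𝒳t]
    [Finite 𝒳] [MeasurableSpace 𝒳] [MeasurableSingletonClass 𝒳]
    [Finite 𝒴] [MeasurableSpace 𝒴] [MeasurableSingletonClass 𝒴]
    [Finite 𝒵] [MeasurableSpace 𝒵] [MeasurableSingletonClass 𝒵]
    [Finite 𝒦] [MeasurableSpace 𝒦] [MeasurableSingletonClass 𝒦]
    {S : Ω → ι → 𝒳t × 𝒳 × 𝒴 × 𝒵} {K : Ω → 𝒦} (hS : Measurable S) (hK : Measurable K)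
    {f : ι → 𝒳 → 𝒳t → ℝ} {g : ι → 𝒳 → 𝒴 × 𝒵 → ℝ}
    (hlaw : ∀ s, pmass μ S s = ∏ j, f j (s j).2.1 (s j).1 * g j (s j).2.1 (s j).2.2)
    (hKS : IndepRV μ K S) {past future : ι → Prop} (hdisj : ∀ j, future j → ¬ past j) :
    CondIndepRV μ
      (fun ω => fun j : {j // past j} => (S ω j).2.2)
      (fun ω => ((fun j : {j // past j} => (S ω j).2.1),
        (fun j : {j // future j} => (S ω j).2.2.1), K ω))
      (fun ω => ((fun j => (S ω j).1), fun j : {j // ¬ past j} => (S ω j).2)) := by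
  have hpast := condIndepRV_restrict_of_letterwise hS hK hlaw hKS past
  have hregroup := hpast.comp_right (by fun_prop) fun _ c =>
    (c.2, (fun j : {j // future j} => (c.2.2 ⟨j, hdisj j j.2⟩).2.1), c.1)
  exact hregroup.weak_union (by fun_prop) (by fun_prop)

/-- Under the converse setup, for every `i`, `Z^{i−1}` is conditionally independent of
`(Xᵢ, W)` given `(X^{i−1}, Y_{i+1}ⁿ, K)`, and `Z^{i−1}` is conditionally independent
of `(Yᵢ, W)` given `(X^{i−1}, Y_{i+1}ⁿ, K)`. -/
theorem eavesdropper_past_condIndep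
    {𝒳 𝒳t 𝒴 𝒵 𝒲 𝒦 : Type}
    [Fintype 𝒳] [Fintype 𝒳t] [Fintype 𝒴] [Fintype 𝒵] [Fintype 𝒲] [Fintype 𝒦]
    [MeasurableSpace 𝒳] [DiscreteMeasurableSpace 𝒳]
    [MeasurableSpace 𝒳t] [DiscreteMeasurableSpace 𝒳t]
    [MeasurableSpace 𝒴] [DiscreteMeasurableSpace 𝒴]
    [MeasurableSpace 𝒵] [DiscreteMeasurableSpace 𝒵]
    [MeasurableSpace 𝒲] [DiscreteMeasurableSpace 𝒲]
    [MeasurableSpace 𝒦] [DiscreteMeasurableSpace 𝒦]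
    {Ω : Type} [MeasurableSpace Ω] (μ : MeasureTheory.Measure Ω)
    [MeasureTheory.IsProbabilityMeasure μ]
    {n : ℕ} (S : Ω → Fin n → 𝒳t × 𝒳 × 𝒴 × 𝒵) (K : Ω → 𝒦)
    (hSmeas : Measurable S) (hKmeas : Measurable K)
    (pX : 𝒳 → ℝ) (pXt : 𝒳 → 𝒳t → ℝ) (pYZ : 𝒳 → 𝒴 × 𝒵 → ℝ)
    (hpX0 : ∀ x, 0 ≤ pX x) (hpX1 : ∑ x, pX x = 1)
    (hpXt0 : ∀ x a, 0 ≤ pXt x a) (hpXt1 : ∀ x, ∑ a, pXt x a = 1)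
    (hpYZ0 : ∀ x yz, 0 ≤ pYZ x yz) (hpYZ1 : ∀ x, ∑ yz, pYZ x yz = 1)
    (hiid : HasIIDLaw μ S (fun s => pX s.2.1 * pXt s.2.1 s.1 * pYZ s.2.1 s.2.2))
    (hKunif : UniformRV μ K) (hKind : IndepRV μ K S)
    (enc : (Fin n → 𝒳t) → 𝒦 → 𝒲)
    :
    ∀ i : Fin n,
      CondIndepRV μ
        (fun ω => (fun j : {j : Fin n // j.1 < i} => (S ω j.1).2.2.2))
        (fun ω => ((fun j : {j : Fin n // j.1 < i} => (S ω j.1).2.1), (fun j : {j : Fin n // i < j} => (S ω j.1).2.2.1), K ω))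
        (fun ω => ((S ω i).2.1, enc (fun j => (S ω j).1) (K ω))) ∧
      CondIndepRV μ
        (fun ω => (fun j : {j : Fin n // j.1 < i} => (S ω j.1).2.2.2))
        (fun ω => ((fun j : {j : Fin n // j.1 < i} => (S ω j.1).2.1), (fun j : {j : Fin n // i < j} => (S ω j.1).2.2.1), K ω))
        (fun ω => ((S ω i).2.2.1, enc (fun j => (S ω j).1) (K ω))) := by
  intro i
  have hZ := (eavesdropper_past_condIndep_general hSmeas hKmeas
    (f := fun _ x a => pX x * pXt x a) (g := fun _ => pYZ) hiid hKind
    (past := fun j => j.1 < i) (future := fun j => i < j) fun _ hj => hj.le.not_gt).comp_left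
      (by fun_prop) fun _ yz j => (yz j).2
  exact ⟨hZ.comp_right (by fun_prop) fun b c => ((c.2 ⟨i, lt_irrefl _⟩).1, enc c.1 b.2.2),
    hZ.comp_right (by fun_prop) fun b c => ((c.2 ⟨i, lt_irrefl _⟩).2.1, enc c.1 b.2.2)⟩
end
end
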